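/- Neither the ℝ²-valued process (K(t), B(t))_{t≥0} nor the ℝ²-valued process (K'(t), B(t))_{t≥0} is Markov. -/

import Mathlib

open MeasureTheory ProbabilityTheory Set Filter Topology
open scoped Classical

noncomputable section

/-- The σ-algebra generated by a process `Y` up to time `t` (over times in `[0, t]`),
i.e. `σ(Y u : 0 ≤ u ≤ t)`. -/
def natSigma {Ω E : Type*} [MeasurableSpace E] (Y : ℝ → Ω → E) (t : ℝ) :
    MeasurableSpace Ω :=
  ⨆ u : Set.Icc (0 : ℝ) t, MeasurableSpace.comap (Y u) inferInstance

/-- The σ-algebra generated by the whole (nonnegative-time) process `Y`. -/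
def procSigma {Ω E : Type*} [MeasurableSpace E] (Y : ℝ → Ω → E) :
    MeasurableSpace Ω :=
  ⨆ u : Set.Ici (0 : ℝ), MeasurableSpace.comap (Y u) inferInstance

/-- `B` is a standard one-dimensional Brownian motion (with `B 0 = 0`) under `P`:
measurable, a.s. starting at `0` and continuous on `[0, ∞)`, with Gaussian increments
`B t - B s ~ N(0, t - s)` that are independent of the past. -/
structure IsBrownianMotion {Ω : Type*} [MeasurableSpace Ω] (P : Measure Ω)
    (B : ℝ → Ω → ℝ) : Prop where
  measurable : ∀ t : ℝ, Measurable (B t)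
  init : ∀ᵐ ω ∂P, B 0 ω = 0
  cont : ∀ᵐ ω ∂P, ContinuousOn (fun t => B t ω) (Set.Ici 0)
  incr_law : ∀ s t : ℝ, 0 ≤ s → s ≤ t →
    P.map (fun ω => B t ω - B s ω) = gaussianReal 0 (Real.toNNReal (t - s))
  incr_indep : ∀ s t : ℝ, 0 ≤ s → s ≤ t →
    Indep (MeasurableSpace.comap (fun ω => B t ω - B s ω) inferInstance)
      (natSigma B s) P

/-- `W` is a standard `n`-dimensional Brownian motion started at the origin:
its coordinate processes are independent standard one-dimensional Brownian motions. -/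
def IsBrownianMotionND {Ω : Type*} [MeasurableSpace Ω] (P : Measure Ω) {n : ℕ}
    (W : ℝ → Ω → EuclideanSpace ℝ (Fin n)) : Prop :=
  (∀ i : Fin n, IsBrownianMotion P (fun t ω => W t ω i)) ∧
  iIndep (fun i : Fin n => procSigma (fun t ω => W t ω i)) P

/-- The least concave majorant on `[0, ∞)` of a function `f : ℝ → ℝ`:
`t ↦ inf { c t | c concave on [0,∞) and c ≥ f on [0,∞) }`. -/
def concaveMajorant (f : ℝ → ℝ) (t : ℝ) : ℝ :=
  sInf {y | ∃ c : ℝ → ℝ, ConcaveOn ℝ (Set.Ici 0) c ∧ (∀ u, 0 ≤ u → f u ≤ c u) ∧ y = c t}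

/-- Right-hand derivative. -/
def rightDeriv (f : ℝ → ℝ) (t : ℝ) : ℝ := derivWithin f (Set.Ioi t) t

/-- `D(t)`: the first vertex (contact point of the concave majorant) at or after time `t`. -/
def firstVertex (f : ℝ → ℝ) (t : ℝ) : ℝ :=
  sInf {u | t ≤ u ∧ concaveMajorant f u = f u}

/-- The concave majorant process `K` of `B`. -/
def Kproc {Ω : Type*} (B : ℝ → Ω → ℝ) (t : ℝ) (ω : Ω) : ℝ :=
  concaveMajorant (fun u => B u ω) t

/-- The process `X = 2K - B`. -/
def Xproc {Ω : Type*} (B : ℝ → Ω → ℝ) (t : ℝ) (ω : Ω) : ℝ :=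
  2 * Kproc B t ω - B t ω

/-- The right-hand slope process `K'` of the concave majorant. -/
def Kslope {Ω : Type*} (B : ℝ → Ω → ℝ) (t : ℝ) (ω : Ω) : ℝ :=
  rightDeriv (fun u => Kproc B u ω) t

/-- The process `D` of first vertices: `D(t) = inf {u ≥ t : K u = B u}`. -/
def Dproc {Ω : Type*} (B : ℝ → Ω → ℝ) (t : ℝ) (ω : Ω) : ℝ :=
  firstVertex (fun u => B u ω) t

/-- A process `Y` is Markov (w.r.t. its natural filtration): for all `0 ≤ s ≤ t`,
`σ(Y t)` is conditionally independent of `σ(Y u : 0 ≤ u ≤ s)` given `σ(Y s)`. -/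
def IsMarkov {Ω E : Type*} [mΩ : MeasurableSpace Ω] [StandardBorelSpace Ω]
    [MeasurableSpace E] (P : Measure Ω) [IsFiniteMeasure P] (Y : ℝ → Ω → E) : Prop :=
  ∀ s t : ℝ, 0 ≤ s → s ≤ t →
    ∃ hs : MeasurableSpace.comap (Y s) inferInstance ≤ mΩ,
      CondIndep (MeasurableSpace.comap (Y s) inferInstance)
        (MeasurableSpace.comap (Y t) inferInstance)
        (natSigma Y s) hs P

/-!
If `Y` is Markov and a functional `V` of `Y t` is bounded above by a functional `U` of the past
`(Y u)_{u ≤ s}`, then some measurable `g` satisfies `V ≤ g (Y s) ≤ U` almost surely. The law of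
Brownian motion is quasi-invariant under adding linear combinations of the ramps `t ↦ min t r`
(Cameron–Martin, elementary here because `B r` is independent of `t ↦ B t - (min t r / r) B r`).
Hence for almost every path `F` and countably many shifts `h₁`, `h₂` at once: whenever `F + h₁` and
`F + h₂` give the same `Y s`, the functional `V` at `F + h₂` is at most `U` at `F + h₁`.

Here the present time is `s = 2`. Adding two tall peaks, at times `1` and `3`, makes the concave
majorant affine around time `2`. For `(K, B)`, concavity bounds `K (5 / 2)` by the past of `K`, with
equality if `K` is affine; tilting the affine piece upwards about time `2` violates the bound but
alters neither `K 2` nor `B 2`. For `(K', B)`, the past of `B` together with the slope `K' 2` bounds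
`B 3`; raising both peaks by the same large amount violates the bound but alters neither `K' 2` nor
`B 2`.
-/

open scoped NNReal

section Interpolation

variable {Ω : Type*} {m m₁ m₂ mΩ : MeasurableSpace Ω} {P : Measure Ω} [IsFiniteMeasure P]

lemma ae_notMem_of_condExp_indicator_eq_zero (hm : m ≤ mΩ) {C : Set Ω}
    (hC : MeasurableSet C) :
    ∀ᵐ ω ∂P, (P[C.indicator (fun _ => (1 : ℝ)) | m]) ω = 0 → ω ∉ C := by
  set w := P[C.indicator (fun _ => (1 : ℝ)) | m]
  have hZ : MeasurableSet[m] {ω | w ω = 0} :=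
    stronglyMeasurable_condExp.measurable (measurableSet_singleton 0)
  have hint : ∫ ω in {ω | w ω = 0}, w ω ∂P = P.real ({ω | w ω = 0} ∩ C) := by
    refine (setIntegral_condExp hm ((integrable_const (1 : ℝ)).indicator hC) hZ).trans ?_
    rw [setIntegral_indicator hC]
    simp
  have hzero : ∫ ω in {ω | w ω = 0}, w ω ∂P = 0 :=
    setIntegral_eq_zero_of_forall_eq_zero fun _ h => h
  have hnull : P ({ω | w ω = 0} ∩ C) = 0 := by
    rw [← measureReal_eq_zero_iff, ← hint, hzero]
  filter_upwards [measure_eq_zero_iff_ae_notMem.1 hnull] with ω hω hwω hωC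
  exact hω ⟨hwω, hωC⟩

variable [StandardBorelSpace Ω]

lemma exists_measurableSet_separating_of_condIndep {hm : m ≤ mΩ} (hm₁ : m₁ ≤ mΩ) (hm₂ : m₂ ≤ mΩ)
    (h : CondIndep m m₁ m₂ hm P) {C D : Set Ω} (hC : MeasurableSet[m₁] C)
    (hD : MeasurableSet[m₂] D) (hCD : ∀ᵐ ω ∂P, ω ∈ C → ω ∉ D) :
    ∃ W, MeasurableSet[m] W ∧ (∀ᵐ ω ∂P, ω ∈ C → ω ∈ W) ∧ ∀ᵐ ω ∂P, ω ∈ D → ω ∉ W := by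
  have hprod := (condIndep_iff m m₁ m₂ hm hm₁ hm₂ P).1 h C D hC hD
  have hinter : P[(C ∩ D).indicator (fun _ => (1 : ℝ)) | m] =ᵐ[P] 0 := by
    have : (C ∩ D).indicator (fun _ => (1 : ℝ)) =ᵐ[P] 0 := by
      filter_upwards [hCD] with ω hω
      exact indicator_of_notMem (fun h => hω h.1 h.2) _
    exact (condExp_congr_ae this).trans (by rw [condExp_zero])
  refine ⟨{ω | P[C.indicator (fun _ => (1 : ℝ)) | m] ω = 0}ᶜ,
    (stronglyMeasurable_condExp.measurable (measurableSet_singleton 0)).compl, ?_, ?_⟩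
  · filter_upwards [ae_notMem_of_condExp_indicator_eq_zero hm (hm₁ _ hC)] with ω hω hωC hω0
    exact hω hω0 hωC
  · filter_upwards [ae_notMem_of_condExp_indicator_eq_zero hm (hm₂ _ hD), hprod, hinter]
      with ω hω hprodω hinterω hωD hωC
    rw [hinterω] at hprodω
    exact (mul_eq_zero.1 hprodω.symm).elim hωC fun h => hω h hωD

lemma exists_measurable_between_of_condIndep {α : Type*} [CompleteLinearOrder α] [DenselyOrdered α]
    [TopologicalSpace α] [OrderTopology α] [SecondCountableTopology α] [MeasurableSpace α]
    [BorelSpace α] {hm : m ≤ mΩ} (hm₁ : m₁ ≤ mΩ) (hm₂ : m₂ ≤ mΩ)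
    (h : CondIndep m m₁ m₂ hm P) {V U : Ω → α} (hV : Measurable[m₁] V) (hU : Measurable[m₂] U)
    (hVU : V ≤ᵐ[P] U) : ∃ G : Ω → α, Measurable[m] G ∧ V ≤ᵐ[P] G ∧ G ≤ᵐ[P] U := by
  obtain ⟨D, hDc, hDd⟩ := TopologicalSpace.exists_countable_dense α
  have := hDc.to_subtype
  have hsep (x : α) : ∃ W, MeasurableSet[m] W ∧ (∀ᵐ ω ∂P, x < V ω → ω ∈ W) ∧
      ∀ᵐ ω ∂P, U ω ≤ x → ω ∉ W :=
    exists_measurableSet_separating_of_condIndep hm₁ hm₂ h (hV measurableSet_Ioi)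
      (hU measurableSet_Iic) (by
        filter_upwards [hVU] with ω hω hVx hUx
        exact not_le.2 (lt_of_lt_of_le hVx hω) hUx)
  choose W hW hVW hUW using hsep
  refine ⟨fun ω => ⨆ x : D, if ω ∈ W x then (x : α) else ⊥,
    Measurable.iSup fun x => Measurable.ite (hW x) measurable_const measurable_const, ?_, ?_⟩
  · filter_upwards [ae_all_iff.2 fun x : D => hVW x] with ω hω
    refine le_of_forall_lt fun y hy => ?_
    obtain ⟨x, hxD, hyx, hxV⟩ := hDd.exists_between hy
    exact hyx.trans_le (le_iSup_of_le ⟨x, hxD⟩ (by rw [if_pos (hω ⟨x, hxD⟩ hxV)]))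
  · filter_upwards [ae_all_iff.2 fun x : D => hUW x] with ω hω
    refine iSup_le fun x => ?_
    split_ifs with hx
    · exact (not_le.1 fun hUx => hω x hUx hx).le
    · exact bot_le

end Interpolation

section Markov

variable {Ω E : Type*} [MeasurableSpace E] {Y : ℝ → Ω → E}

lemma measurable_natSigma {s u : ℝ} (hu : 0 ≤ u) (hus : u ≤ s) : Measurable[natSigma Y s] (Y u) :=
  (comap_measurable (Y u)).mono
    (le_iSup (fun u : Icc (0 : ℝ) s => MeasurableSpace.comap (Y u) inferInstance) ⟨u, hu, hus⟩)
    le_rfl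

variable [MeasurableSpace Ω] [StandardBorelSpace Ω] {P : Measure Ω} [IsFiniteMeasure P]

lemma IsMarkov.measurable (hY : IsMarkov P Y) {t : ℝ} (ht : 0 ≤ t) : Measurable (Y t) :=
  (comap_measurable (Y t)).mono (hY t t ht le_rfl).1 le_rfl

lemma IsMarkov.natSigma_le (hY : IsMarkov P Y) (s : ℝ) :
    natSigma Y s ≤ ‹MeasurableSpace Ω› :=
  iSup_le fun u => (hY.measurable u.2.1).comap_le

lemma IsMarkov.exists_measurable_between (hY : IsMarkov P Y) {s t : ℝ} (hs : 0 ≤ s) (hst : s ≤ t)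
    {v : E → EReal} (hv : Measurable v) {U : Ω → EReal} (hU : Measurable[natSigma Y s] U)
    (hVU : ∀ᵐ ω ∂P, v (Y t ω) ≤ U ω) :
    ∃ g : E → EReal, Measurable g ∧ ∀ᵐ ω ∂P, v (Y t ω) ≤ g (Y s ω) ∧ g (Y s ω) ≤ U ω := by
  obtain ⟨hYs, hindep⟩ := hY s t hs hst
  obtain ⟨G, hG, hVG, hGU⟩ := exists_measurable_between_of_condIndep
    (hY.measurable (hs.trans hst)).comap_le (hY.natSigma_le s) hindep
    (hv.comp (comap_measurable (Y t))) hU hVU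
  obtain ⟨g, hg, rfl⟩ := hG.exists_eq_measurable_comp
  exact ⟨g, hg, hVG.and hGU⟩

end Markov

section BrownianMotion

variable {Ω : Type*} [MeasurableSpace Ω] {P : Measure Ω}

lemma ae_exists_abs_le_of_map_eq {ι : Type*} {X Y : ι → Ω → ℝ} (mX : ∀ t, Measurable (X t))
    (mY : ∀ t, Measurable (Y t)) (hXY : P.map (fun ω t => X t ω) = P.map (fun ω t => Y t ω))
    {T : Set ι} (hT : T.Countable) (h : ∀ᵐ ω ∂P, ∃ M : ℕ, ∀ t ∈ T, |X t ω| ≤ M) :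
    ∀ᵐ ω ∂P, ∃ M : ℕ, ∀ t ∈ T, |Y t ω| ≤ M := by
  have hS : MeasurableSet {f : ι → ℝ | ∃ M : ℕ, ∀ t ∈ T, |f t| ≤ M} := by
    simp only [ofPred_exists, ofPred_forall]
    exact MeasurableSet.iUnion fun M => MeasurableSet.biInter hT fun t _ =>
      measurableSet_le (measurable_pi_apply t).abs measurable_const
  rw [← ae_map_iff (measurable_pi_lambda _ mX).aemeasurable hS, hXY] at h
  exact (ae_map_iff (measurable_pi_lambda _ mY).aemeasurable hS).1 h

variable [IsProbabilityMeasure P]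

lemma IsBrownianMotion.hasIndepIncrements {B : ℝ → Ω → ℝ} (hB : IsBrownianMotion P B) :
    HasIndepIncrements (fun (t : ℝ≥0) ω => B t ω) P := by
  refine HasIndepIncrements.of_nat fun t ht _ => ?_
  rw [iIndepFun_iff_measure_inter_preimage_eq_mul]
  intro S
  induction S using Finset.induction_on_max with
  | empty => intro sets _; simp
  | insert a s has ih =>
    intro sets hsets
    rw [Finset.prod_insert fun ha => (has a ha).false,
      ← ih fun i hi => hsets i (Finset.mem_insert_of_mem hi), Finset.set_biInter_insert]
    refine (Indep_iff _ _ _).1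
      (hB.incr_indep (t a) (t (a + 1)) (t a).2 (by exact_mod_cast ht a.le_succ)) _ _
      ⟨sets a, hsets a (by simp), rfl⟩ ?_
    have hpast (k : ℕ) (hk : k ≤ a) : Measurable[natSigma B (t a)] (B (t k)) :=
      measurable_natSigma (t k).2 (by exact_mod_cast ht hk)
    exact Finset.measurableSet_biInter (m := natSigma B (t a)) _ fun i hi =>
      ((hpast _ (has i hi)).sub (hpast _ (has i hi).le)) (hsets i (Finset.mem_insert_of_mem hi))

lemma IsBrownianMotion.isBrownianReal {B : ℝ → Ω → ℝ} (hB : IsBrownianMotion P B) :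
    IsBrownianReal (fun (t : ℝ≥0) ω => B t ω) P where
  toIsPreBrownianReal := by
    refine hB.hasIndepIncrements.isPreBrownianReal_of_hasLaw fun t =>
      ⟨(hB.measurable t).aemeasurable, ?_⟩
    have hincr := hB.incr_law 0 t le_rfl t.2
    rw [sub_zero, Real.toNNReal_coe] at hincr
    rw [← hincr]
    refine Measure.map_congr ?_
    filter_upwards [hB.init] with ω hω
    rw [hω, sub_zero]
  cont := by
    filter_upwards [hB.cont] with ω hω
    exact hω.comp_continuous NNReal.continuous_coe fun t => t.2

variable {X Y : ℝ≥0 → Ω → ℝ}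

lemma map_eq_of_isPreBrownianReal (hX : IsPreBrownianReal X P) (hY : IsPreBrownianReal Y P)
    (mX : ∀ t, Measurable (X t)) (mY : ∀ t, Measurable (Y t)) :
    P.map (fun ω t => X t ω) = P.map (fun ω t => Y t ω) := by
  refine (map_eq_iff_forall_finset_map_restrict_eq (measurable_pi_lambda _ mX).aemeasurable
    (measurable_pi_lambda _ mY).aemeasurable).2 fun I => ?_
  rw [(hX.hasLaw I).map_eq, (hY.hasLaw I).map_eq]

/- Time inversion turns boundedness on `[0, 1]` into linear growth on `[1, ∞)`. -/
lemma ae_exists_abs_le_mul_one_add (hX : IsBrownianReal X P) (mX : ∀ t, Measurable (X t)) :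
    ∀ᵐ ω ∂P, ∃ M : ℕ, ∀ t, |X t ω| ≤ M * (1 + t) := by
  obtain ⟨D, hDc, hDd⟩ := TopologicalSpace.exists_countable_dense ℝ≥0
  have hunit : ∀ᵐ ω ∂P, ∃ M : ℕ, ∀ t ≤ 1, |X t ω| ≤ M := by
    filter_upwards [hX.cont] with ω hω
    obtain ⟨C, hC⟩ := (isCompact_Icc (a := (0 : ℝ≥0)) (b := 1)).exists_bound_of_continuousOn
      hω.continuousOn
    obtain ⟨M, hM⟩ := exists_nat_ge C
    exact ⟨M, fun t ht => (hC t ⟨zero_le, ht⟩).trans hM⟩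
  have hinv : ∀ᵐ ω ∂P, ∃ M : ℕ, ∀ t ∈ (fun t => t⁻¹) '' (D ∩ Ioi 1), |t * X (1 / t) ω| ≤ M := by
    refine ae_exists_abs_le_of_map_eq mX (fun t => (mX _).const_mul _)
      (map_eq_of_isPreBrownianReal hX.toIsPreBrownianReal hX.toIsPreBrownianReal.inv mX
        fun t => (mX _).const_mul _) ((hDc.mono inter_subset_left).image _) ?_
    filter_upwards [hunit] with ω ⟨M, hM⟩
    refine ⟨M, ?_⟩
    rintro _ ⟨t, ⟨-, ht⟩, rfl⟩
    exact hM _ (inv_le_one_of_one_le₀ (mem_Ioi.1 ht).le)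
  filter_upwards [hunit, hinv, hX.cont] with ω ⟨M₁, h₁⟩ ⟨M₂, h₂⟩ hcont
  refine ⟨M₁ + M₂, fun t => hDd.induction (P := fun t => |X t ω| ≤ (M₁ + M₂ : ℕ) * (1 + t))
    (fun t ht => ?_) (isClosed_le hcont.abs (by fun_prop)) t⟩
  have hM₁ : (0 : ℝ) ≤ M₁ * t := by positivity
  have hM₂ : (0 : ℝ) ≤ M₂ * t := by positivity
  push_cast
  rcases le_or_gt t 1 with ht1 | ht1
  · linarith [h₁ t ht1, (Nat.cast_nonneg M₂ : (0 : ℝ) ≤ M₂)]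
  · have hbound := h₂ t⁻¹ ⟨t, ⟨ht, ht1⟩, rfl⟩
    have htpos : (0 : ℝ) < t := by exact_mod_cast zero_lt_one.trans ht1
    rw [one_div, inv_inv, abs_mul, NNReal.coe_inv, abs_of_pos (inv_pos.2 htpos),
      inv_mul_le_iff₀ htpos] at hbound
    linarith [(Nat.cast_nonneg M₂ : (0 : ℝ) ≤ M₂), (Nat.cast_nonneg M₁ : (0 : ℝ) ≤ M₁)]

lemma indepFun_bridge_eval (hX : IsPreBrownianReal X P) {r : ℝ≥0} (hr : r ≠ 0) :
    IndepFun (fun ω t => X t ω - (min t r : ℝ≥0) / r * X r ω) (X r) P := by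
  have mX t := hX.aemeasurable t
  have hsq t : MemLp (X t) 2 P := (hX.isGaussianProcess.hasGaussianLaw_eval t).memLp_two
  have hind : IndepFun (fun ω t => X t ω - (min t r : ℝ≥0) / r * X r ω)
      (fun ω (_ : Unit) => X r ω) P := by
    apply IsGaussianProcess.indepFun_of_covariance_eq_zero
    · apply hX.isGaussianProcess.of_isGaussianProcess
      rintro (t | -)
      · exact ⟨{t, r},
          { toFun x := x ⟨t, by simp⟩ - (min t r : ℝ≥0) / r * x ⟨r, by simp⟩
            map_add' x y := by simp; ring
            map_smul' c x := by simp; ring }, by simp⟩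
      · exact ⟨{r}, ContinuousLinearMap.proj ⟨r, by simp⟩, by simp⟩
    any_goals fun_prop
    intro t _
    rw [covariance_fun_sub_left (hsq _) ((hsq _).const_mul _) (hsq _), covariance_const_mul_left,
      hX.covariance_eval, hX.covariance_eval, min_self, div_mul_cancel₀ _ (by exact_mod_cast hr),
      sub_self]
  exact hind.comp measurable_id (measurable_pi_apply ())

end BrownianMotion

section QuasiInvariance

open Measure

lemma quasiMeasurePreserving_add_gaussianReal (m c : ℝ) {v : ℝ≥0} (hv : v ≠ 0) :
    QuasiMeasurePreserving (· + c) (gaussianReal m v) (gaussianReal m v) where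
  measurable := measurable_add_const c
  absolutelyContinuous := by
    rw [gaussianReal_map_add_const]
    exact (gaussianReal_absolutelyContinuous _ hv).trans (gaussianReal_absolutelyContinuous' _ hv)

variable {Ω E : Type*} [MeasurableSpace Ω] {P : Measure Ω} [IsFiniteMeasure P]
  [AddCommGroup E] [Module ℝ E] [MeasurableSpace E]

lemma quasiMeasurePreserving_add_smul_of_indepFun {R : Ω → E} {Z : Ω → ℝ} {v : E} {c : ℝ}
    (hR : Measurable R) (hZ : Measurable Z) (hRZ : IndepFun R Z P)
    (hv : Measurable fun p : E × ℝ => p.1 + p.2 • v)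
    (hc : QuasiMeasurePreserving (· + c) (P.map Z) (P.map Z)) :
    QuasiMeasurePreserving (· + c • v) (P.map fun ω => R ω + Z ω • v)
      (P.map fun ω => R ω + Z ω • v) := by
  have hlaw : P.map (fun ω => R ω + Z ω • v)
      = ((P.map R).prod (P.map Z)).map fun p => p.1 + p.2 • v := by
    rw [← (indepFun_iff_map_prod_eq_prod_map_map hR.aemeasurable hZ.aemeasurable).1 hRZ,
      Measure.map_map hv (hR.prodMk hZ)]
    rfl
  have hshift : Measurable fun x : E => x + c • v := hv.comp measurable_prodMk_right
  have hprod : ((P.map R).prod (P.map Z)).map (Prod.map id (· + c))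
      ≪ (P.map R).prod (P.map Z) := by
    rw [← map_prod_map _ _ measurable_id hc.measurable, Measure.map_id]
    exact AbsolutelyContinuous.rfl.prod hc.absolutelyContinuous
  refine ⟨hshift, ?_⟩
  rw [hlaw, Measure.map_map hshift hv]
  have hcomm : (fun x : E => x + c • v) ∘ (fun p : E × ℝ => p.1 + p.2 • v)
      = (fun p : E × ℝ => p.1 + p.2 • v) ∘ Prod.map id (· + c) := by
    ext p
    simp [add_smul, add_assoc]
  rw [hcomm, ← Measure.map_map hv (measurable_id.prodMap hc.measurable)]
  exact hprod.map hv

end QuasiInvariance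

section PathSpace

/-- Continuous paths of at most linear growth. A path on `[0, ∞)` is encoded by its extension to
`ℝ` that is constant on `(-∞, 0]`; the σ-algebra is generated by the evaluations. -/
def linearGrowthPath : Submodule ℝ (ℝ → ℝ) where
  carrier := {f | Continuous f ∧ ∃ M : ℝ, ∀ u, |f u| ≤ M * (1 + |u|)}
  zero_mem' := ⟨continuous_const, 0, by simp⟩
  add_mem' := by
    rintro f g ⟨hf, M, hM⟩ ⟨hg, N, hN⟩
    exact ⟨hf.add hg, M + N, fun u => (abs_add_le _ _).trans (by linarith [hM u, hN u])⟩
  smul_mem' := by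
    rintro c f ⟨hf, M, hM⟩
    refine ⟨hf.const_smul c, |c| * M, fun u => ?_⟩
    rw [Pi.smul_apply, smul_eq_mul, abs_mul, mul_assoc]
    exact mul_le_mul_of_nonneg_left (hM u) (abs_nonneg c)

namespace linearGrowthPath

instance : CoeFun linearGrowthPath fun _ => ℝ → ℝ := ⟨Subtype.val⟩

lemma continuous (F : linearGrowthPath) : Continuous F := F.2.1

lemma exists_abs_le (F : linearGrowthPath) : ∃ M : ℝ, ∀ u, |F u| ≤ M * (1 + |u|) := F.2.2

lemma measurable_iff {Ω : Type*} [MeasurableSpace Ω] {X : Ω → linearGrowthPath} :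
    Measurable X ↔ ∀ u, Measurable fun ω => X ω u := by
  rw [← measurable_pi_iff]
  exact ⟨measurable_subtype_coe.comp, fun h => h.subtype_mk⟩

lemma measurable_apply (u : ℝ) : Measurable fun F : linearGrowthPath => F u :=
  measurable_iff.1 measurable_id u

/-- The path `u ↦ u ∧ r` that grows with unit slope up to time `r` and is constant afterwards. -/
def ramp (r : ℝ) : linearGrowthPath where
  val u := min (max u 0) r
  property := by
    refine ⟨by fun_prop, 1 + |r|, fun u => ?_⟩
    rw [abs_le]
    constructor <;> cases min_cases (max u 0) r <;> cases max_cases u 0 <;>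
      nlinarith [abs_nonneg r, abs_nonneg u, le_abs_self u, le_abs_self r, neg_abs_le r,
        mul_nonneg (abs_nonneg r) (abs_nonneg u)]

lemma ramp_apply (r : ℝ) {u : ℝ} (hu : 0 ≤ u) : ramp r u = min u r :=
  congrArg (min · r) (max_eq_left hu)

/-- The span of the ramps: the continuous piecewise linear paths that start at `0` and are
eventually constant, a dense part of the Cameron–Martin space of Brownian motion. -/
def rampSpan : Submodule ℝ linearGrowthPath := Submodule.span ℝ (ramp '' Ioi 0)

lemma smul_ramp_mem_rampSpan (a : ℝ) {r : ℝ} (hr : 0 < r) : a • ramp r ∈ rampSpan :=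
  Submodule.smul_mem _ _ (Submodule.subset_span ⟨r, hr, rfl⟩)

end linearGrowthPath

end PathSpace

section BrownianPath

open Measure linearGrowthPath

variable {Ω : Type*} [MeasurableSpace Ω] {P : Measure Ω} [IsProbabilityMeasure P]
  {B : ℝ → Ω → ℝ}

/-- `X` is a version of the Brownian motion `B` as a random element of the path space. -/
structure IsPathVersion (P : Measure Ω) (B : ℝ → Ω → ℝ) (X : Ω → linearGrowthPath) : Prop where
  measurable : Measurable X
  ae_eq : ∀ᵐ ω ∂P, ∀ u, X ω u = B (max u 0) ω

lemma IsBrownianMotion.exists_isPathVersion (hB : IsBrownianMotion P B) :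
    ∃ X : Ω → linearGrowthPath, IsPathVersion P B X := by
  have hmem : ∀ᵐ ω ∂P, (fun u => B (max u 0) ω) ∈ (linearGrowthPath : Set (ℝ → ℝ)) := by
    filter_upwards [hB.cont, ae_exists_abs_le_mul_one_add hB.isBrownianReal fun t =>
      hB.measurable t] with ω hcont ⟨M, hM⟩
    refine ⟨hcont.comp_continuous (by fun_prop) fun u => le_max_right u 0, M, fun u => ?_⟩
    exact (hM ⟨max u 0, le_max_right u 0⟩).trans <| mul_le_mul_of_nonneg_left
      (add_le_add_right (max_le (le_abs_self u) (abs_nonneg u)) 1) M.cast_nonneg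
  obtain ⟨X, hX, hXmem, hXB⟩ := (measurable_pi_lambda _ fun u => hB.measurable (max u 0)
    : Measurable fun ω u => B (max u 0) ω).aemeasurable.exists_ae_eq_range_subset hmem
      ⟨0, linearGrowthPath.zero_mem⟩
  refine ⟨fun ω => ⟨X ω, hXmem ⟨ω, rfl⟩⟩, hX.subtype_mk, ?_⟩
  filter_upwards [hXB] with ω hω u
  exact (congrFun hω u).symm

variable {X : Ω → linearGrowthPath}

lemma IsPathVersion.indepFun_bridge_eval (hX : IsPathVersion P B X) (hB : IsBrownianMotion P B)
    {r : ℝ} (hr : 0 < r) :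
    IndepFun (fun ω => X ω - (X ω r / r) • ramp r) (fun ω => X ω r) P := by
  have hind : IndepFun (fun ω u => B (max u 0) ω - min (max u 0) r / r * B r ω) (B r) P := by
    lift r to ℝ≥0 using hr.le
    have hres : Measurable fun (f : ℝ≥0 → ℝ) (u : ℝ) => f (max u 0).toNNReal :=
      measurable_pi_lambda _ fun u => measurable_pi_apply _
    convert (_root_.indepFun_bridge_eval hB.isBrownianReal.toIsPreBrownianReal
      (by simpa using hr.ne' : r ≠ 0)).comp hres measurable_id using 1
    · ext ω u
      simp
    · rfl
  have hcoe : IndepFun (fun ω => ((X ω - (X ω r / r) • ramp r : linearGrowthPath) : ℝ → ℝ))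
      (fun ω => X ω r) P := by
    refine hind.congr ?_ ?_
    · filter_upwards [hX.ae_eq] with ω hω
      ext u
      have hval : (X ω - (X ω r / r) • ramp r : linearGrowthPath) u
          = X ω u - X ω r / r * min (max u 0) r := rfl
      rw [hval, hω, hω, max_eq_left hr.le]
      ring
    · filter_upwards [hX.ae_eq] with ω hω
      rw [hω, max_eq_left hr.le]
  rw [IndepFun_iff_Indep] at hcoe ⊢
  convert hcoe using 1
  exact MeasurableSpace.comap_comp

lemma IsPathVersion.quasiMeasurePreserving_add_smul_ramp (hX : IsPathVersion P B X)
    (hB : IsBrownianMotion P B) {r : ℝ} (hr : 0 < r) (a : ℝ) :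
    QuasiMeasurePreserving (· + a • ramp r) (P.map X) (P.map X) := by
  have hZ : Measurable fun ω => X ω r := measurable_iff.1 hX.measurable r
  have hlaw : P.map (fun ω => X ω r) = gaussianReal 0 r.toNNReal := by
    have hincr := hB.incr_law 0 r le_rfl hr.le
    rw [sub_zero] at hincr
    rw [← hincr]
    refine Measure.map_congr ?_
    filter_upwards [hX.ae_eq, hB.init] with ω hω h0
    rw [hω, max_eq_left hr.le, h0, sub_zero]
  have hR : Measurable fun ω => X ω - (X ω r / r) • ramp r :=
    measurable_iff.2 fun u => (measurable_iff.1 hX.measurable u).sub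
      ((hZ.div_const r).mul_const _)
  have hadd : Measurable fun p : linearGrowthPath × ℝ => p.1 + p.2 • r⁻¹ • ramp r :=
    measurable_iff.2 fun u => ((measurable_apply u).comp measurable_fst).add
      (measurable_snd.mul_const _)
  have hquasi := quasiMeasurePreserving_add_smul_of_indepFun (c := a * r) hR hZ
    (hX.indepFun_bridge_eval hB hr) hadd (by
      rw [hlaw]
      exact quasiMeasurePreserving_add_gaussianReal 0 _ (Real.toNNReal_pos.2 hr).ne')
  simpa only [smul_smul, ← div_eq_mul_inv, sub_add_cancel, mul_div_assoc, div_self hr.ne',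
    mul_one] using hquasi

lemma IsPathVersion.quasiMeasurePreserving_add (hX : IsPathVersion P B X)
    (hB : IsBrownianMotion P B) {h : linearGrowthPath} (hh : h ∈ rampSpan) :
    QuasiMeasurePreserving (· + h) (P.map X) (P.map X) := by
  suffices ∀ a : ℝ, QuasiMeasurePreserving (· + a • h) (P.map X) (P.map X) by
    simpa only [one_smul] using this 1
  induction hh using Submodule.span_induction with
  | mem h hh =>
    obtain ⟨r, hr, rfl⟩ := hh
    exact hX.quasiMeasurePreserving_add_smul_ramp hB hr
  | zero =>
    simp only [smul_zero, add_zero]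
    exact fun _ => QuasiMeasurePreserving.id _
  | add f g _ _ hf hg =>
    intro a
    simpa only [Function.comp_def, smul_add, add_assoc] using (hg a).comp (hf a)
  | smul b f _ hf =>
    intro a
    simpa only [smul_smul] using hf (a * b)

end BrownianPath

section ConcaveMajorant

variable {f : ℝ → ℝ}

lemma concaveOn_line (c m s : ℝ) : ConcaveOn ℝ (Ici 0) fun u => c + m * (u - s) := by
  refine ⟨convex_Ici 0, fun x _ y _ a b _ _ hab => le_of_eq ?_⟩
  obtain rfl := eq_sub_of_add_eq' hab
  simp only [smul_eq_mul]
  ring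

lemma concaveMajorant_le {c : ℝ → ℝ} (hc : ConcaveOn ℝ (Ici 0) c) (hfc : ∀ u, 0 ≤ u → f u ≤ c u)
    {t : ℝ} (ht : 0 ≤ t) : concaveMajorant f t ≤ c t :=
  csInf_le ⟨f t, by rintro _ ⟨d, -, hfd, rfl⟩; exact hfd t ht⟩ ⟨c, hc, hfc, rfl⟩

lemma concaveMajorant_congr {g : ℝ → ℝ} (h : ∀ u, 0 ≤ u → f u = g u) :
    concaveMajorant f = concaveMajorant g := by
  ext t
  have hle : ∀ c : ℝ → ℝ, (∀ u, 0 ≤ u → f u ≤ c u) ↔ ∀ u, 0 ≤ u → g u ≤ c u :=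
    fun c => forall₂_congr fun u hu => by rw [h u hu]
  simp only [concaveMajorant, hle]

/-- `f` is bounded above on `[0, ∞)` by a concave function, so that `concaveMajorant f` is not a
junk value. -/
def HasConcaveMajorant (f : ℝ → ℝ) : Prop :=
  ∃ c : ℝ → ℝ, ConcaveOn ℝ (Ici 0) c ∧ ∀ u, 0 ≤ u → f u ≤ c u

lemma linearGrowthPath.hasConcaveMajorant (F : linearGrowthPath) : HasConcaveMajorant F := by
  obtain ⟨M, hM⟩ := linearGrowthPath.exists_abs_le F
  refine ⟨_, concaveOn_line M M 0, fun u hu => (le_abs_self _).trans ((hM u).trans_eq ?_)⟩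
  rw [abs_of_nonneg hu]
  ring

namespace HasConcaveMajorant

lemma le_concaveMajorant (hf : HasConcaveMajorant f) {t : ℝ} (ht : 0 ≤ t) :
    f t ≤ concaveMajorant f t := by
  obtain ⟨c, hc, hfc⟩ := hf
  refine le_csInf ⟨c t, c, hc, hfc, rfl⟩ ?_
  rintro _ ⟨d, -, hfd, rfl⟩
  exact hfd t ht

lemma concaveOn_concaveMajorant (hf : HasConcaveMajorant f) :
    ConcaveOn ℝ (Ici 0) (concaveMajorant f) := by
  refine ⟨convex_Ici 0, fun x hx y hy a b ha hb hab => ?_⟩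
  obtain ⟨c, hc, hfc⟩ := hf
  refine le_csInf ⟨_, c, hc, hfc, rfl⟩ ?_
  rintro _ ⟨d, hd, hfd, rfl⟩
  refine le_trans ?_ (hd.2 hx hy ha hb hab)
  simp only [smul_eq_mul]
  gcongr
  exacts [concaveMajorant_le hd hfd hx, concaveMajorant_le hd hfd hy]

end HasConcaveMajorant

lemma concaveMajorant_eq_line {c m s α β u : ℝ} (hf : ∀ u, 0 ≤ u → f u ≤ c + m * (u - s))
    (h0 : 0 ≤ α) (hα : f α = c + m * (α - s)) (hβ : f β = c + m * (β - s)) (hu : u ∈ Icc α β) :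
    concaveMajorant f u = c + m * (u - s) := by
  have hline := concaveOn_line c m s
  have hmaj : HasConcaveMajorant f := ⟨_, hline, hf⟩
  refine le_antisymm (concaveMajorant_le hline hf (h0.trans hu.1)) ?_
  have h0β : 0 ≤ β := h0.trans (hu.1.trans hu.2)
  have hconc : ConcaveOn ℝ (Ici 0) fun u => concaveMajorant f u + (-c + -m * (u - s)) :=
    hmaj.concaveOn_concaveMajorant.add (concaveOn_line _ _ s)
  have hmin := hconc.min_le_of_mem_Icc h0 h0β hu
  have hKα := hmaj.le_concaveMajorant h0
  have hKβ := hmaj.le_concaveMajorant h0β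
  have hnonneg : 0 ≤ concaveMajorant f u + (-c + -m * (u - s)) :=
    (le_min (by linarith) (by linarith)).trans hmin
  linarith

section Slope

variable {s : ℝ}

lemma tendsto_slope_rightDeriv {c : ℝ → ℝ} (hc : ConcaveOn ℝ (Ici 0) c) (hs : 0 < s) :
    Tendsto (slope c s) (𝓝[>] s) (𝓝 (rightDeriv c s)) := by
  have hdiff : DifferentiableWithinAt ℝ c (Ioi s) s := by
    simpa using (hc.neg.differentiableWithinAt_Ioi_of_mem_interior (by simpa using hs)).neg
  exact (hasDerivWithinAt_iff_tendsto_slope' self_notMem_Ioi).1 hdiff.hasDerivWithinAt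

lemma le_add_rightDeriv_mul_sub {c : ℝ → ℝ} (hc : ConcaveOn ℝ (Ici 0) c) (hs : 0 < s)
    {u : ℝ} (hu : 0 ≤ u) : c u ≤ c s + rightDeriv c s * (u - s) := by
  have hlim := tendsto_slope_rightDeriv hc hs
  rcases lt_trichotomy u s with hus | rfl | hsu
  · have hslope : rightDeriv c s ≤ slope c u s := by
      refine le_of_tendsto hlim (eventually_mem_nhdsWithin.mono fun v hv => ?_)
      simpa only [slope_def_field] using
        hc.slope_anti_adjacent hu (hs.le.trans (le_of_lt hv)) hus hv
    rw [slope_def_field, le_div_iff₀ (sub_pos.2 hus)] at hslope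
    linarith
  · simp
  · have hslope := hc.slope_le_of_hasDerivWithinAt_Ioi hs.le hu hsu
      ((hasDerivWithinAt_iff_tendsto_slope' self_notMem_Ioi).2 hlim)
    rw [slope_def_field, div_le_iff₀ (sub_pos.2 hsu)] at hslope
    linarith

lemma concaveMajorant_le_of_forall_le_line (hf : HasConcaveMajorant f) (hcont : ContinuousAt f s)
    (hs : 0 < s) {y : ℝ}
    (hy : ∀ u ∈ Icc 0 s, f u ≤ y + rightDeriv (concaveMajorant f) s * (u - s)) :
    concaveMajorant f s ≤ y := by
  set K := concaveMajorant f
  set k := rightDeriv K s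
  have hfK : ∀ u, 0 ≤ u → f u ≤ K s + k * (u - s) := fun u hu =>
    (hf.le_concaveMajorant hu).trans (le_add_rightDeriv_mul_sub hf.concaveOn_concaveMajorant hs hu)
  by_contra! hlt
  obtain ⟨z, hyz, hzK⟩ := exists_between hlt
  obtain ⟨η, hη, hnear⟩ : ∃ η > 0, ∀ ⦃u⦄, dist u s < η → f u - k * (u - s) < z := by
    have hφ : ContinuousAt (fun u => f u - k * (u - s)) s := by fun_prop
    refine Metric.eventually_nhds_iff.1 (hφ.eventually_lt_const ?_)
    have hfs : f s ≤ y := by simpa using hy s ⟨hs.le, le_rfl⟩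
    simpa using hfs.trans_lt hyz
  -- Tilting the supporting line at `s` slightly upwards leaves room to lower it below `K s`.
  obtain ⟨δ, hδ, hδη⟩ : ∃ δ > 0, δ * (η + s) = K s - z :=
    ⟨(K s - z) / (η + s), div_pos (sub_pos.2 hzK) (by positivity),
      div_mul_cancel₀ _ (by positivity)⟩
  have hdom : ∀ u, 0 ≤ u → f u ≤ (K s - δ * η) + (k + δ) * (u - s) := by
    intro u hu
    rcases le_or_gt u s with hus | hsu
    · nlinarith [hy u ⟨hu, hus⟩, mul_nonneg hδ.le hu]
    rcases lt_or_ge u (s + η) with hnr | hfar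
    · have := hnear (u := u) (by rw [Real.dist_eq, abs_of_pos (sub_pos.2 hsu)]; linarith)
      nlinarith [mul_pos hδ (sub_pos.2 hsu), mul_pos hδ hs]
    · nlinarith [hfK u hu, mul_nonneg hδ.le (sub_nonneg.2 hfar)]
  have hKs := concaveMajorant_le (concaveOn_line _ _ s) hdom hs.le
  rw [sub_self, mul_zero, add_zero] at hKs
  exact hKs.not_gt (sub_lt_self _ (mul_pos hδ hη))

lemma le_line_of_forall_le_line (hf : HasConcaveMajorant f) (hcont : ContinuousAt f s)
    (hs : 0 < s) {t y : ℝ} (hst : s ≤ t)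
    (hy : ∀ u ∈ Icc 0 s, f u ≤ y + rightDeriv (concaveMajorant f) s * (u - t)) : f t ≤ y := by
  set k := rightDeriv (concaveMajorant f) s
  have hK : concaveMajorant f s ≤ y + k * (s - t) :=
    concaveMajorant_le_of_forall_le_line hf hcont hs fun u hu => (hy u hu).trans_eq (by ring)
  have hft := (hf.le_concaveMajorant (hs.le.trans hst)).trans
    (le_add_rightDeriv_mul_sub hf.concaveOn_concaveMajorant hs (hs.le.trans hst))
  linarith

lemma le_of_forall_rat_mem_Ioo {g : ℝ → ℝ} (hf : Continuous f) (hg : Continuous g) {a b : ℝ}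
    (hab : a < b) (hfg : ∀ q : ℚ, (q : ℝ) ∈ Ioo a b → f q ≤ g q) {u : ℝ} (hu : u ∈ Icc a b) :
    f u ≤ g u := by
  have hdense : Icc a b ⊆ closure (Ioo a b ∩ range ((↑) : ℚ → ℝ)) := by
    rw [← closure_Ioo hab.ne]
    exact closure_minimal (Rat.denseRange_cast.open_subset_closure_inter isOpen_Ioo)
      isClosed_closure
  refine le_on_closure ?_ hf.continuousOn hg.continuousOn (hdense hu)
  rintro _ ⟨hq, q, rfl⟩
  exact hfg q hq

lemma HasConcaveMajorant.coe_le_iSup_rat (hf : HasConcaveMajorant f) (hcont : Continuous f)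
    (hs : 0 < s) {t : ℝ} (hst : s ≤ t) :
    (f t : EReal) ≤ ⨆ q : {q : ℚ // (q : ℝ) ∈ Ioo 0 s},
      ((f q - rightDeriv (concaveMajorant f) s * (q - t) : ℝ) : EReal) := by
  refine EReal.le_of_forall_lt_iff_le.1 fun y hy => EReal.coe_le_coe_iff.2 ?_
  refine le_line_of_forall_le_line hf hcont.continuousAt hs hst fun u hu => ?_
  refine le_of_forall_rat_mem_Ioo (g := fun u => y + rightDeriv (concaveMajorant f) s * (u - t))
    hcont (by fun_prop) hs (fun q hq => ?_) hu
  have := EReal.coe_le_coe_iff.1 ((iSup_le_iff.1 hy.le) ⟨q, hq⟩)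
  linarith

end Slope

section Measurability

variable {s : ℝ}

lemma concaveMajorant_lt_iff_exists_rat (hf : HasConcaveMajorant f) (hcont : Continuous f)
    (hs : 0 < s) {y : ℝ} :
    concaveMajorant f s < y ↔
      ∃ m z : ℚ, (z : ℝ) < y ∧ ∀ q : ℚ, f |(q : ℝ)| ≤ z + m * (|(q : ℝ)| - s) := by
  constructor
  · intro hlt
    obtain ⟨z, hKz, hzy⟩ := exists_rat_btwn hlt
    set k := rightDeriv (concaveMajorant f) s
    obtain ⟨m, hkm, hmk⟩ := exists_rat_btwn
      (lt_add_of_pos_right k (div_pos (sub_pos.2 hKz) hs))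
    rw [← sub_lt_iff_lt_add', lt_div_iff₀ hs] at hmk
    refine ⟨m, z, hzy, fun q => ?_⟩
    have hq := (hf.le_concaveMajorant (abs_nonneg (q : ℝ))).trans
      (le_add_rightDeriv_mul_sub hf.concaveOn_concaveMajorant hs (abs_nonneg _))
    nlinarith [mul_nonneg (sub_pos.2 hkm).le (abs_nonneg (q : ℝ))]
  · rintro ⟨m, z, hzy, hq⟩
    have hreal : ∀ u : ℝ, f |u| ≤ z + m * (|u| - s) := fun u =>
      Rat.denseRange_cast.induction_on u (isClosed_le (by fun_prop) (by fun_prop)) hq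
    have hKs := concaveMajorant_le (concaveOn_line z m s)
      (fun u hu => by simpa only [abs_of_nonneg hu] using hreal u) hs.le
    rw [sub_self, mul_zero, add_zero] at hKs
    exact hKs.trans_lt hzy

namespace linearGrowthPath

lemma measurable_concaveMajorant (hs : 0 < s) :
    Measurable fun F : linearGrowthPath => concaveMajorant F s := by
  refine measurable_of_Iio fun y => ?_
  have hiff := fun F : linearGrowthPath =>
    concaveMajorant_lt_iff_exists_rat (hasConcaveMajorant F) (continuous F) hs (y := y)
  simp only [preimage, mem_Iio, hiff, ofPred_exists, ofPred_and, ofPred_forall]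
  exact .iUnion fun m => .iUnion fun z => .inter (.const _) <| .iInter fun q =>
    measurableSet_le (measurable_apply _) measurable_const

lemma measurable_rightDeriv_concaveMajorant (hs : 0 < s) :
    Measurable fun F : linearGrowthPath => rightDeriv (concaveMajorant F) s := by
  have hseq : Tendsto (fun n : ℕ => s + 1 / ((n : ℝ) + 1)) atTop (𝓝[>] s) := by
    refine tendsto_nhdsWithin_iff.2 ⟨?_, .of_forall fun n => ?_⟩
    · simpa using tendsto_one_div_add_atTop_nhds_zero_nat.const_add s
    · exact lt_add_of_pos_right s Nat.one_div_pos_of_nat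
  refine measurable_of_tendsto_metrizable (fun n : ℕ => ?_) (tendsto_pi_nhds.2 fun F =>
    (tendsto_slope_rightDeriv (hasConcaveMajorant F).concaveOn_concaveMajorant hs).comp hseq)
  simp only [Function.comp_apply, slope_def_field]
  exact ((measurable_concaveMajorant (by positivity)).sub
    (measurable_concaveMajorant hs)).div_const _

end linearGrowthPath

end Measurability

end ConcaveMajorant

section WindowTangent

lemma exists_line_touching {A C : Set ℝ} (hA : IsCompact A) (hC : IsCompact C) (hA₀ : A.Nonempty)
    (hC₀ : C.Nonempty) {s : ℝ} (hAs : ∀ a ∈ A, a < s) (hCs : ∀ b ∈ C, s < b) {g : ℝ → ℝ}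
    (hg : Continuous g) :
    ∃ c m : ℝ, (∃ a ∈ A, g a = c + m * (a - s)) ∧ (∃ b ∈ C, g b = c + m * (b - s)) ∧
      ∀ u ∈ A ∪ C, g u ≤ c + m * (u - s) := by
  -- Among the chords from `A` to `C`, the one that is highest at `s` works.
  have hcont : ContinuousOn (fun p : ℝ × ℝ => ((p.2 - s) * g p.1 + (s - p.1) * g p.2) / (p.2 - p.1))
      (A ×ˢ C) :=
    ContinuousOn.div (by fun_prop) (by fun_prop) fun p hp =>
      (sub_pos.2 ((hAs _ hp.1).trans (hCs _ hp.2))).ne'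
  obtain ⟨⟨a, b⟩, ⟨ha, hb⟩, hmax⟩ := (hA.prod hC).exists_isMaxOn (hA₀.prod hC₀) hcont
  have has := hAs a ha
  have hsb := hCs b hb
  have hab : b - a ≠ 0 := (sub_pos.2 (has.trans hsb)).ne'
  obtain ⟨c, hc⟩ : ∃ c, ((b - s) * g a + (s - a) * g b) / (b - a) = c := ⟨_, rfl⟩
  obtain ⟨m, hm⟩ : ∃ m, (g b - g a) / (b - a) = m := ⟨_, rfl⟩
  have hga : g a = c + m * (a - s) := by rw [← hc, ← hm]; field_simp; ring
  have hgb : g b = c + m * (b - s) := by rw [← hc, ← hm]; field_simp; ring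
  refine ⟨c, m, ⟨a, ha, hga⟩, ⟨b, hb, hgb⟩, ?_⟩
  rintro u (hu | hu)
  · have hus := hAs u hu
    have hchord : ((b - s) * g u + (s - u) * g b) / (b - u) ≤ c := hc ▸ hmax (mk_mem_prod hu hb)
    rw [div_le_iff₀ (by linarith), hgb] at hchord
    refine le_of_mul_le_mul_left ?_ (sub_pos.2 hsb)
    linarith
  · have hsu := hCs u hu
    have hchord : ((u - s) * g a + (s - a) * g u) / (u - a) ≤ c := hc ▸ hmax (mk_mem_prod ha hu)
    rw [div_le_iff₀ (by linarith), hga] at hchord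
    refine le_of_mul_le_mul_left ?_ (sub_pos.2 has)
    linarith

/-- The two windows, around the times `1` and `3`, in which the concave majorant is forced to touch
the path. -/
def windows : Set ℝ := Icc (1 / 2) (3 / 2) ∪ Icc (5 / 2) (7 / 2)

lemma windows_subset_Icc : windows ⊆ Icc (1 / 2) (7 / 2) :=
  union_subset (Icc_subset_Icc_right (by norm_num)) (Icc_subset_Icc_left (by norm_num))

/-- The line `u ↦ c + m * (u - 2)` dominates `f` on `[0, ∞)` and touches it in both windows; off the
windows there is a gap of at least `2`, which makes the contact robust under perturbations. -/
structure IsWindowTangent (f : ℝ → ℝ) (c m : ℝ) : Prop where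
  touch_left : ∃ a ∈ Icc (1 / 2) (3 / 2), f a = c + m * (a - 2)
  touch_right : ∃ b ∈ Icc (5 / 2) (7 / 2), f b = c + m * (b - 2)
  le_of_mem : ∀ u ∈ windows, f u ≤ c + m * (u - 2)
  add_two_le : ∀ u, 0 ≤ u → u ∉ windows → f u + 2 ≤ c + m * (u - 2)

namespace IsWindowTangent

variable {f : ℝ → ℝ} {c m : ℝ}

lemma le_line (h : IsWindowTangent f c m) {u : ℝ} (hu : 0 ≤ u) : f u ≤ c + m * (u - 2) := by
  by_cases hw : u ∈ windows
  · exact h.le_of_mem u hw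
  · linarith [h.add_two_le u hu hw]

lemma concaveMajorant_add_eq (h : IsWindowTangent f c m) {φ : ℝ → ℝ} {κ μ : ℝ}
    (hφ : ∀ u ∈ windows, φ u = κ + μ * (u - 2)) (hφ₂ : ∀ u, 0 ≤ u → φ u ≤ κ + μ * (u - 2) + 2)
    {u : ℝ} (hu : u ∈ Icc (3 / 2) (5 / 2)) :
    concaveMajorant (f + φ) u = (c + κ) + (m + μ) * (u - 2) := by
  obtain ⟨a, ha, hfa⟩ := h.touch_left
  obtain ⟨b, hb, hfb⟩ := h.touch_right
  have hline : ∀ u, 0 ≤ u → (f + φ) u ≤ (c + κ) + (m + μ) * (u - 2) := by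
    intro u hu
    rw [Pi.add_apply]
    by_cases hw : u ∈ windows
    · linarith [h.le_of_mem u hw, hφ u hw]
    · linarith [h.add_two_le u hu hw, hφ₂ u hu]
  refine concaveMajorant_eq_line hline (by linarith [ha.1] : 0 ≤ a) ?_ ?_
    ⟨ha.2.trans hu.1, hu.2.trans hb.1⟩
  · rw [Pi.add_apply, hfa, hφ a (.inl ha)]
    ring
  · rw [Pi.add_apply, hfb, hφ b (.inr hb)]
    ring

lemma concaveMajorant_eq (h : IsWindowTangent f c m) {u : ℝ} (hu : u ∈ Icc (3 / 2) (5 / 2)) :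
    concaveMajorant f u = c + m * (u - 2) := by
  simpa using h.concaveMajorant_add_eq (φ := 0) (κ := 0) (μ := 0) (by simp) (by simp) hu

end IsWindowTangent

lemma rightDeriv_eq_of_eqOn_line {f : ℝ → ℝ} {c m s a b : ℝ}
    (hf : EqOn f (fun u => c + m * (u - s)) (Icc a b)) {t : ℝ} (ht : t ∈ Ico a b) :
    rightDeriv f t = m := by
  have hev : f =ᶠ[𝓝[>] t] fun u => c + m * (u - s) :=
    (hf.mono (Ioo_subset_Icc_self.trans (Icc_subset_Icc_left ht.1))).eventuallyEq_of_mem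
      (Ioo_mem_nhdsGT ht.2)
  have hline : HasDerivAt (fun u => c + m * (u - s)) m t := by
    simpa using (((hasDerivAt_id t).sub_const s).const_mul m).const_add c
  exact (hline.hasDerivWithinAt.congr_of_eventuallyEq hev (hf ⟨ht.1, ht.2.le⟩)).derivWithin
    (uniqueDiffWithinAt_Ioi t)

end WindowTangent

namespace linearGrowthPath

/-- The path with peaks at the times `1` and `3`, where it touches the line `u ↦ 1 + u` from below;
adding a large multiple of it to a path creates tall peaks there. -/
def twinPeaks : linearGrowthPath := (4 : ℝ) • ramp 1 + (-6 : ℝ) • ramp 2 + (4 : ℝ) • ramp 3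

/-- The path that equals `u - 2` for `u` between `1 / 2` and `7 / 2`: it tilts the concave majorant
around time `2`. -/
def tilt : linearGrowthPath := (-4 : ℝ) • ramp (1 / 2) + (1 : ℝ) • ramp (7 / 2)

/-- The path that equals `1` on the windows and vanishes at time `2`: it raises both peaks and keeps
the present value of the path. -/
def plateau : linearGrowthPath :=
  (2 : ℝ) • ramp (1 / 2) + (2 : ℝ) • ramp (3 / 2) + (-4 : ℝ) • ramp 2 + (2 : ℝ) • ramp (5 / 2)

section Apply

variable {u : ℝ}

lemma twinPeaks_apply (hu : 0 ≤ u) :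
    twinPeaks u = 4 * min u 1 - 6 * min u 2 + 4 * min u 3 := by
  have : twinPeaks u = 4 * ramp 1 u + -6 * ramp 2 u + 4 * ramp 3 u := rfl
  rw [this, ramp_apply _ hu, ramp_apply _ hu, ramp_apply _ hu]
  ring

lemma tilt_apply (hu : 0 ≤ u) : tilt u = -4 * min u (1 / 2) + min u (7 / 2) := by
  have : tilt u = -4 * ramp (1 / 2) u + 1 * ramp (7 / 2) u := rfl
  rw [this, ramp_apply _ hu, ramp_apply _ hu, one_mul]

lemma plateau_apply (hu : 0 ≤ u) :
    plateau u = 2 * min u (1 / 2) + 2 * min u (3 / 2) - 4 * min u 2 + 2 * min u (5 / 2) := by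
  have : plateau u = 2 * ramp (1 / 2) u + 2 * ramp (3 / 2) u + -4 * ramp 2 u + 2 * ramp (5 / 2) u :=
    rfl
  rw [this, ramp_apply _ hu, ramp_apply _ hu, ramp_apply _ hu, ramp_apply _ hu]
  ring

lemma twinPeaks_le (hu : 0 ≤ u) : twinPeaks u ≤ 1 + u := by
  rw [twinPeaks_apply hu]
  grind

lemma twinPeaks_le_of_notMem_windows (hu : 0 ≤ u) (hw : u ∉ windows) :
    twinPeaks u ≤ 8 / 9 * (1 + u) := by
  rw [twinPeaks_apply hu]
  simp only [windows, mem_union, mem_Icc, not_or, not_and_or, not_le] at hw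
  grind

lemma tilt_of_mem_Icc (hu : u ∈ Icc (1 / 2) (7 / 2)) : tilt u = u - 2 := by
  rw [tilt_apply (by linarith [hu.1]), min_eq_right hu.1, min_eq_left hu.2]
  ring

lemma tilt_le (hu : 0 ≤ u) : tilt u ≤ u := by
  rw [tilt_apply hu]
  linarith [min_le_left u (7 / 2), le_min hu (by norm_num : (0 : ℝ) ≤ 1 / 2)]

lemma plateau_of_mem_windows (hu : u ∈ windows) : plateau u = 1 := by
  simp only [windows, mem_union, mem_Icc] at hu
  rw [plateau_apply (by grind)]
  grind

lemma plateau_two : plateau 2 = 0 := by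
  norm_num [plateau_apply]

lemma plateau_le_one (hu : 0 ≤ u) : plateau u ≤ 1 := by
  rw [plateau_apply hu]
  rcases le_total u 2 with h | h
  · rw [min_eq_left h]
    linarith [min_le_right u (1 / 2), min_le_left u (3 / 2), min_le_left u (5 / 2)]
  · rw [min_eq_right h]
    linarith [min_le_right u (1 / 2), min_le_right u (3 / 2), min_le_right u (5 / 2)]

end Apply

lemma twinPeaks_mem_rampSpan : twinPeaks ∈ rampSpan :=
  add_mem (add_mem (smul_ramp_mem_rampSpan _ (by norm_num))
    (smul_ramp_mem_rampSpan _ (by norm_num))) (smul_ramp_mem_rampSpan _ (by norm_num))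

lemma tilt_mem_rampSpan : tilt ∈ rampSpan :=
  add_mem (smul_ramp_mem_rampSpan _ (by norm_num)) (smul_ramp_mem_rampSpan _ (by norm_num))

lemma plateau_mem_rampSpan : plateau ∈ rampSpan :=
  add_mem (add_mem (add_mem (smul_ramp_mem_rampSpan _ (by norm_num))
    (smul_ramp_mem_rampSpan _ (by norm_num))) (smul_ramp_mem_rampSpan _ (by norm_num)))
    (smul_ramp_mem_rampSpan _ (by norm_num))

end linearGrowthPath

section TwinPeaks

open linearGrowthPath

lemma neg_mul_one_add_le_line {M c m a b : ℝ} (hM : 0 ≤ M) (ha : a ∈ Icc (1 / 2) (3 / 2))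
    (hb : b ∈ Icc (5 / 2) (7 / 2)) (h₁ : -(2 * M) ≤ c + m * (1 - 2))
    (h₃ : -(4 * M) ≤ c + m * (3 - 2)) (hMa : c + m * (a - 2) ≤ M * (1 + a))
    (hMb : c + m * (b - 2) ≤ M * (1 + b)) {u : ℝ} (hu : 0 ≤ u) :
    -(6 * M * (1 + u)) ≤ c + m * (u - 2) := by
  have hm_ge : -(5 * M) ≤ m := by nlinarith [ha.1, ha.2]
  have hm_le : m ≤ 4 * M := by nlinarith [hb.1, hb.2]
  rcases le_total u 1 with _ | _ <;> nlinarith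

/- Relative to the line `u ↦ 100 * M * (1 + u)` through the peaks, the tangent is at least
`-6 * M * (1 + u)`, whereas off the windows the path is at most `(1 - 100 / 9) * M * (1 + u)`. -/
lemma exists_isWindowTangent_of_abs_le {f : ℝ → ℝ} (hf : Continuous f) {M : ℝ} (hM : 1 ≤ M)
    (hfM : ∀ u, 0 ≤ u → |f u| ≤ M * (1 + u)) :
    ∃ c m, IsWindowTangent (fun u => f u + 100 * M * twinPeaks u) c m := by
  obtain ⟨c, m, ⟨a, ha, hga⟩, ⟨b, hb, hgb⟩, hline⟩ :=
    exists_line_touching (isCompact_Icc (a := (1 / 2 : ℝ)) (b := 3 / 2))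
      (isCompact_Icc (a := (5 / 2 : ℝ)) (b := 7 / 2)) (s := 2) ⟨1, by norm_num⟩ ⟨3, by norm_num⟩
      (fun x hx => by linarith [hx.2]) (fun x hx => by linarith [hx.1])
      (g := fun u => f u + 100 * M * twinPeaks u)
      (hf.add ((linearGrowthPath.continuous twinPeaks).const_mul (100 * M)))
  have hpeak₁ : twinPeaks 1 = 2 := by norm_num [twinPeaks_apply]
  have hpeak₃ : twinPeaks 3 = 4 := by norm_num [twinPeaks_apply]
  have hle : ∀ u, 0 ≤ u → f u + 100 * M * twinPeaks u ≤ M * (1 + u) + 100 * M * (1 + u) := by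
    intro u hu
    gcongr
    exacts [(le_abs_self _).trans (hfM u hu), twinPeaks_le hu]
  have hlower : ∀ u, 0 ≤ u → 94 * M * (1 + u) ≤ c + m * (u - 2) := by
    intro u hu
    have h₁ : f 1 + 100 * M * twinPeaks 1 ≤ c + m * (1 - 2) := hline 1 (.inl (by norm_num))
    have h₃ : f 3 + 100 * M * twinPeaks 3 ≤ c + m * (3 - 2) := hline 3 (.inr (by norm_num))
    rw [hpeak₁] at h₁
    rw [hpeak₃] at h₃
    have := neg_mul_one_add_le_line (M := M) (c := c - 300 * M) (m := m - 100 * M) (by linarith)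
      ha hb (by linarith [(abs_le.1 (hfM 1 (by norm_num))).1])
      (by linarith [(abs_le.1 (hfM 3 (by norm_num))).1])
      (by linarith [hle a (by linarith [ha.1])]) (by linarith [hle b (by linarith [hb.1])]) hu
    linarith
  refine ⟨c, m, ⟨a, ha, hga⟩, ⟨b, hb, hgb⟩, hline, fun u hu hw => ?_⟩
  have hpeaks := mul_le_mul_of_nonneg_left (twinPeaks_le_of_notMem_windows hu hw)
    (by linarith : 0 ≤ 100 * M)
  nlinarith [(le_abs_self _).trans (hfM u hu), hlower u hu]

lemma exists_isWindowTangent (F : linearGrowthPath) :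
    ∃ (N : ℕ) (c m : ℝ), IsWindowTangent (F + (N : ℝ) • twinPeaks : linearGrowthPath) c m := by
  obtain ⟨M, hM⟩ := linearGrowthPath.exists_abs_le F
  obtain ⟨n, hn⟩ := exists_nat_ge (max M 1)
  obtain ⟨c, m, h⟩ := exists_isWindowTangent_of_abs_le (linearGrowthPath.continuous F)
    ((le_max_right M 1).trans hn) fun u hu => by
      have hMn : M ≤ n := (le_max_left M 1).trans hn
      have hFu := hM u
      rw [abs_of_nonneg hu] at hFu
      exact hFu.trans (by gcongr)
  exact ⟨100 * n, c, m, by push_cast; exact h⟩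

end TwinPeaks

section Shift

open linearGrowthPath

variable {Ω E : Type*} [MeasurableSpace Ω] [StandardBorelSpace Ω] [MeasurableSpace E]
  {P : Measure Ω} [IsProbabilityMeasure P] {B : ℝ → Ω → ℝ} {X : Ω → linearGrowthPath}
  {Y : ℝ → Ω → E} {y : ℝ → linearGrowthPath → E} {s t : ℝ}

lemma IsMarkov.ae_le_of_add_eq_add (hB : IsBrownianMotion P B) (hX : IsPathVersion P B X)
    (hY : IsMarkov P Y) (hYX : ∀ᵐ ω ∂P, ∀ u, 0 < u → Y u ω = y u (X ω))
    (hy : ∀ u, 0 < u → Measurable (y u)) (hs : 0 < s) (hst : s ≤ t)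
    {V : E → EReal} (hV : Measurable V) {U : (Ioc 0 s → E) → EReal} (hU : Measurable U)
    (hVU : ∀ F, V (y t F) ≤ U fun u => y u F) {h₁ h₂ : linearGrowthPath}
    (h₁_mem : h₁ ∈ rampSpan) (h₂_mem : h₂ ∈ rampSpan) :
    ∀ᵐ F ∂P.map X, y s (F + h₁) = y s (F + h₂) →
      V (y t (F + h₂)) ≤ U fun u => y u (F + h₁) := by
  obtain ⟨g, hg, hVgU⟩ := hY.exists_measurable_between hs.le hst hV
    (U := fun ω => U fun u => Y u ω)
    (hU.comp (@measurable_pi_lambda _ _ _ (natSigma Y s) _ _ fun u =>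
      measurable_natSigma u.2.1.le u.2.2)) (by
      filter_upwards [hYX] with ω hω
      simpa only [hω t (hs.trans_le hst), fun u : Ioc 0 s => hω u u.2.1] using hVU (X ω))
  have hyU : Measurable fun F => U fun u => y u F :=
    hU.comp (measurable_pi_lambda _ fun u => hy u u.2.1)
  have hgy : Measurable fun F => g (y s F) := hg.comp (hy s hs)
  have hbetween : ∀ᵐ F ∂P.map X, V (y t F) ≤ g (y s F) ∧ g (y s F) ≤ U fun u => y u F := by
    refine (ae_map_iff hX.measurable.aemeasurable ((measurableSet_le
      (hV.comp (hy t (hs.trans_le hst))) hgy).inter (measurableSet_le hgy hyU))).2 ?_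
    filter_upwards [hYX, hVgU] with ω hω hVgU
    simp only [hω t (hs.trans_le hst), hω s hs, fun u : Ioc 0 s => hω u u.2.1] at hVgU
    exact hVgU
  filter_upwards [(hX.quasiMeasurePreserving_add hB h₁_mem).ae hbetween,
    (hX.quasiMeasurePreserving_add hB h₂_mem).ae hbetween] with F hF₁ hF₂ hpresent
  calc V (y t (F + h₂)) ≤ g (y s (F + h₂)) := hF₂.1
    _ = g (y s (F + h₁)) := by rw [hpresent]
    _ ≤ U fun u => y u (F + h₁) := hF₁.2

lemma not_isMarkov_of_forall_exists_shift (hB : IsBrownianMotion P B) (hX : IsPathVersion P B X)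
    (hYX : ∀ᵐ ω ∂P, ∀ u, 0 < u → Y u ω = y u (X ω)) (hy : ∀ u, 0 < u → Measurable (y u))
    (hs : 0 < s) (hst : s ≤ t) {V : E → EReal} (hV : Measurable V)
    {U : (Ioc 0 s → E) → EReal} (hU : Measurable U) (hVU : ∀ F, V (y t F) ≤ U fun u => y u F)
    {ι : Type*} [Countable ι] {h₁ h₂ : ι → linearGrowthPath} (h₁_mem : ∀ i, h₁ i ∈ rampSpan)
    (h₂_mem : ∀ i, h₂ i ∈ rampSpan)
    (hshift : ∀ F, ∃ i, y s (F + h₁ i) = y s (F + h₂ i) ∧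
      U (fun u => y u (F + h₁ i)) < V (y t (F + h₂ i))) :
    ¬ IsMarkov P Y := by
  intro hY
  have : IsProbabilityMeasure (P.map X) :=
    Measure.isProbabilityMeasure_map hX.measurable.aemeasurable
  obtain ⟨F, hF⟩ := (ae_all_iff.2 fun i => hY.ae_le_of_add_eq_add hB hX hYX hy hs hst hV hU hVU
    (h₁_mem i) (h₂_mem i)).exists
  obtain ⟨i, hpresent, hlt⟩ := hshift F
  exact hlt.not_ge (hF i hpresent)

end Shift

section Majorant

open linearGrowthPath

variable {Ω : Type*} [MeasurableSpace Ω] {P : Measure Ω} {B : ℝ → Ω → ℝ}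
  {X : Ω → linearGrowthPath}

lemma IsPathVersion.ae_concaveMajorant_eq (hX : IsPathVersion P B X) :
    ∀ᵐ ω ∂P, concaveMajorant (fun u => B u ω) = concaveMajorant (X ω) := by
  filter_upwards [hX.ae_eq] with ω hω
  exact concaveMajorant_congr fun u hu => by rw [hω, max_eq_left hu]

lemma IsWindowTangent.concaveMajorant_add_tilt {f : ℝ → ℝ} {c m : ℝ} (h : IsWindowTangent f c m)
    {u : ℝ} (hu : u ∈ Icc (3 / 2) (5 / 2)) :
    concaveMajorant (f + tilt) u = c + (m + 1) * (u - 2) := by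
  rw [h.concaveMajorant_add_eq (κ := 0) (μ := 1) (fun v hv => ?_) (fun v hv => ?_) hu, add_zero]
  · rw [tilt_of_mem_Icc (windows_subset_Icc hv)]
    ring
  · linarith [tilt_le hv]

lemma IsWindowTangent.concaveMajorant_add_smul_plateau {f : ℝ → ℝ} {c m : ℝ}
    (h : IsWindowTangent f c m) {r : ℝ} (hr : 0 ≤ r) {u : ℝ} (hu : u ∈ Icc (3 / 2) (5 / 2)) :
    concaveMajorant (f + r • plateau) u = c + r + m * (u - 2) := by
  rw [h.concaveMajorant_add_eq (κ := r) (μ := 0) (fun v hv => ?_) (fun v hv => ?_) hu, add_zero]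
  · simp [plateau_of_mem_windows hv]
  · have := mul_le_mul_of_nonneg_left (plateau_le_one hv) hr
    simp only [Pi.smul_apply, smul_eq_mul]
    linarith

lemma IsWindowTangent.rightDeriv_concaveMajorant {f : ℝ → ℝ} {c m : ℝ}
    (h : IsWindowTangent f c m) : rightDeriv (concaveMajorant f) 2 = m :=
  rightDeriv_eq_of_eqOn_line (fun _ hu => h.concaveMajorant_eq hu) (by norm_num)

lemma IsWindowTangent.rightDeriv_concaveMajorant_add_smul_plateau {f : ℝ → ℝ} {c m : ℝ}
    (h : IsWindowTangent f c m) {r : ℝ} (hr : 0 ≤ r) :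
    rightDeriv (concaveMajorant (f + r • plateau)) 2 = m :=
  rightDeriv_eq_of_eqOn_line (fun _ hu => h.concaveMajorant_add_smul_plateau hr hu) (by norm_num)

variable [StandardBorelSpace Ω] [IsProbabilityMeasure P]

/- A tilt of both peaks at time `2` keeps `K(2)` but increases the slope there. Before time `2` the
slope is visible as `(K(2) - K(3/2)) / (1/2)`, which by concavity bounds the slope after `2`. -/
lemma IsBrownianMotion.not_isMarkov_Kproc (hB : IsBrownianMotion P B) :
    ¬ IsMarkov P fun t ω => (Kproc B t ω, B t ω) := by
  obtain ⟨X, hX⟩ := hB.exists_isPathVersion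
  refine not_isMarkov_of_forall_exists_shift (s := 2) (t := 5 / 2) (V := fun p => (p.1 : EReal))
    (y := fun t F => (concaveMajorant F t, F t))
    (U := fun p => ((2 * (p ⟨2, by norm_num⟩).1 - (p ⟨3 / 2, by norm_num⟩).1 : ℝ) : EReal))
    (h₁ := fun N : ℕ => (N : ℝ) • twinPeaks) (h₂ := fun N : ℕ => (N : ℝ) • twinPeaks + tilt)
    hB hX ?_ (fun u hu => (measurable_concaveMajorant hu).prodMk (measurable_apply u))
    (by norm_num) (by norm_num) (by fun_prop) (by fun_prop) (fun F => ?_)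
    (fun N => rampSpan.smul_mem _ twinPeaks_mem_rampSpan)
    (fun N => add_mem (rampSpan.smul_mem _ twinPeaks_mem_rampSpan) tilt_mem_rampSpan) fun F => ?_
  · filter_upwards [hX.ae_eq, hX.ae_concaveMajorant_eq] with ω hω hK u hu
    rw [hω, max_eq_left hu.le, ← hK]
    rfl
  · have hmid := (hasConcaveMajorant F).concaveOn_concaveMajorant.2 (x := 3 / 2) (y := 5 / 2)
      (by norm_num) (by norm_num) (by norm_num : (0 : ℝ) ≤ 1 / 2) (by norm_num : (0 : ℝ) ≤ 1 / 2)
      (by norm_num)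
    rw [show (1 / 2 : ℝ) • (3 / 2 : ℝ) + (1 / 2 : ℝ) • (5 / 2 : ℝ) = 2 by norm_num, smul_eq_mul,
      smul_eq_mul] at hmid
    exact EReal.coe_le_coe_iff.2 (by linarith)
  · obtain ⟨N, c, m, h⟩ := exists_isWindowTangent F
    have htilt : ((F + ((N : ℝ) • twinPeaks + tilt) : linearGrowthPath) : ℝ → ℝ) =
        (F + (N : ℝ) • twinPeaks : linearGrowthPath) + tilt := (add_assoc _ _ _).symm
    refine ⟨N, Prod.ext ?_ ?_, ?_⟩
    · simp only [htilt]
      rw [h.concaveMajorant_eq (by norm_num), h.concaveMajorant_add_tilt (by norm_num)]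
      ring
    · have htwo : tilt 2 = 0 := by rw [tilt_of_mem_Icc (by norm_num), sub_self]
      simp [htilt, htwo]
    · simp only [htilt]
      rw [h.concaveMajorant_eq (by norm_num), h.concaveMajorant_eq (by norm_num),
        h.concaveMajorant_add_tilt (by norm_num), EReal.coe_lt_coe_iff]
      linarith

/- A supporting line at `2` of slope `K'(2)` lies above the path, and minimality of the majorant
allows it to be read off the path on `(0, 2)` alone: this is the bound on `B(3)` by the past. -/
lemma IsBrownianMotion.not_isMarkov_Kslope (hB : IsBrownianMotion P B) :
    ¬ IsMarkov P fun t ω => (Kslope B t ω, B t ω) := by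
  obtain ⟨X, hX⟩ := hB.exists_isPathVersion
  refine not_isMarkov_of_forall_exists_shift (s := 2) (t := 3) (V := fun p => (p.2 : EReal))
    (y := fun t F => (rightDeriv (concaveMajorant F) t, F t))
    (U := fun p => ⨆ q : {q : ℚ // (q : ℝ) ∈ Ioo 0 2},
      (((p ⟨q, q.2.1, q.2.2.le⟩).2 - (p ⟨2, by norm_num⟩).1 * (q - 3) : ℝ) : EReal))
    (h₁ := fun N : ℕ × ℕ => (N.1 : ℝ) • twinPeaks)
    (h₂ := fun N : ℕ × ℕ => (N.1 : ℝ) • twinPeaks + (N.2 : ℝ) • plateau)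
    hB hX ?_ (fun u hu => (measurable_rightDeriv_concaveMajorant hu).prodMk (measurable_apply u))
    (by norm_num) (by norm_num) (by fun_prop) (.iSup fun q => by fun_prop) (fun F => ?_)
    (fun N => rampSpan.smul_mem _ twinPeaks_mem_rampSpan)
    (fun N => add_mem (rampSpan.smul_mem _ twinPeaks_mem_rampSpan)
      (rampSpan.smul_mem _ plateau_mem_rampSpan)) fun F => ?_
  · filter_upwards [hX.ae_eq, hX.ae_concaveMajorant_eq] with ω hω hK u hu
    rw [hω, max_eq_left hu.le, ← hK]
    rfl
  · exact (hasConcaveMajorant F).coe_le_iSup_rat (continuous F) (by norm_num) (by norm_num)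
  · obtain ⟨N, c, m, h⟩ := exists_isWindowTangent F
    obtain ⟨j, hj⟩ := exists_nat_gt (c + m - (F + (N : ℝ) • twinPeaks : linearGrowthPath) 3)
    have hplateau : ((F + ((N : ℝ) • twinPeaks + (j : ℝ) • plateau) : linearGrowthPath) : ℝ → ℝ) =
        (F + (N : ℝ) • twinPeaks : linearGrowthPath) + (j : ℝ) • plateau := (add_assoc _ _ _).symm
    have hslope := h.rightDeriv_concaveMajorant
    have hslope' := h.rightDeriv_concaveMajorant_add_smul_plateau j.cast_nonneg
    have hthree : plateau 3 = 1 := plateau_of_mem_windows (.inr (by norm_num))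
    refine ⟨(N, j), Prod.ext ?_ ?_, ?_⟩
    · simp only [hplateau, hslope, hslope']
    · simp [hplateau, plateau_two]
    · refine (iSup_le (a := ((c + m : ℝ) : EReal)) fun q => EReal.coe_le_coe_iff.2 ?_).trans_lt
        (EReal.coe_lt_coe_iff.2 ?_)
      · simp only [hslope]
        linarith [h.le_line q.2.1.le]
      · simp only [hplateau, Pi.add_apply, Pi.smul_apply, hthree, smul_eq_mul]
        linarith

end Majorant

/-- Neither `(K(t), B(t))` nor `(K'(t), B(t))` is a Markov process. -/
theorem K_B_and_Kslope_B_not_markov {Ω : Type*} [MeasurableSpace Ω] [StandardBorelSpace Ω]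
    (P : Measure Ω) [IsProbabilityMeasure P] (B : ℝ → Ω → ℝ)
    (hB : IsBrownianMotion P B) :
    ¬ IsMarkov P (fun t ω => ((Kproc B t ω, B t ω) : ℝ × ℝ)) ∧
    ¬ IsMarkov P (fun t ω => ((Kslope B t ω, B t ω) : ℝ × ℝ)) :=
  ⟨hB.not_isMarkov_Kproc, hB.not_isMarkov_Kslope⟩
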